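/- Let k ≥ 3 be an odd integer and set n = (k^4 + 2k^3 + 6k^2 + 6k + 1)/2. Let g₁ = 1, g₂ = (k^3 + k^2 + 5k + 3)/2, g₃ = (k^4 + 2k^2 - 8k - 11)/4, g₄ = (k^4 + 2k^2 - 4k - 7)/4, viewed as elements of ℤ/nℤ. Then for every x ∈ ℤ/nℤ there exist integers c₁, c₂, c₃, c₄ with |c₁| + |c₂| + |c₃| + |c₄| ≤ k and x = c₁·g₁ + c₂·g₂ + c₃·g₃ + c₄·g₄. (Equivalently, the undirected circulant graph on ℤ/nℤ with connection set {±g₁, ±g₂, ±g₃, ±g₄} has diameter at most k.) -/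

import Mathlib

/-!
Write `k = 2m + 1`. Sending `v ∈ ℤ⁴` to `∑ vᵢ gᵢ` turns the claim into a covering statement: the
`ℓ¹`-balls of radius `2m + 1` around the points of the lattice of relations between the generators
cover `ℤ⁴`. By induction on the norm, only vectors `v` of norm `2m + 2` need to be brought closer.

Subtracting `w` changes the norm by `‖w‖ - 2t`, where `t` is the overlap of `v` and `w`: the sum of
`min |vᵢ| |wᵢ|` over the coordinates in which they have the same sign. In each orthant there is a
relation of norm `4m + 3` with all coordinates about `m` in size; it shortens every `v` contained in
the box it spans. A `v` that sticks out of this box has a long coordinate and overlaps by at least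
`m + 3` with one of eight relations of norm `2m + 4`, each concentrated in one coordinate. The few
exceptions have zero coordinates and, apart from `±(0, 0, 0, 4)` for `m = 1`, lie in the box of a
relation from a neighbouring orthant.
-/

section Covering

variable {ι : Type*} [Fintype ι]

/-- The `ℓ¹`-norm of an integer vector, as a natural number. -/
def l1Norm (v : ι → ℤ) : ℕ := ∑ i, (v i).natAbs

/-- `v` lies in one of the `ℓ¹`-balls of radius `r` centred at the points of the lattice `L`. -/
def IsCovered (L : Submodule ℤ (ι → ℤ)) (r : ℕ) (v : ι → ℤ) : Prop :=
  ∃ w ∈ L, l1Norm (v - w) ≤ r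

variable {L : Submodule ℤ (ι → ℤ)} {r : ℕ} {v w : ι → ℤ}

theorem l1Norm_neg (v : ι → ℤ) : l1Norm (-v) = l1Norm v := by
  simp only [l1Norm, Pi.neg_apply, Int.natAbs_neg]

theorem l1Norm_add_le (v w : ι → ℤ) : l1Norm (v + w) ≤ l1Norm v + l1Norm w := by
  simp only [l1Norm, ← Finset.sum_add_distrib]
  exact Finset.sum_le_sum fun i _ ↦ Int.natAbs_add_le (v i) (w i)

theorem l1Norm_comp_perm (v : ι → ℤ) (σ : Equiv.Perm ι) : l1Norm (v ∘ σ) = l1Norm v :=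
  Equiv.sum_comp σ fun i ↦ (v i).natAbs

theorem exists_unit_l1Norm_sub_lt (hv : v ≠ 0) :
    ∃ u : ι → ℤ, l1Norm u = 1 ∧ l1Norm (v - u) < l1Norm v := by
  classical
  obtain ⟨i, hi⟩ := Function.ne_iff.mp hv
  rw [Pi.zero_apply] at hi
  refine ⟨Pi.single i (v i).sign, ?_, Finset.sum_lt_sum (fun j _ ↦ ?_) ⟨i, Finset.mem_univ i, ?_⟩⟩
  · rw [l1Norm, Finset.sum_eq_single_of_mem i (Finset.mem_univ i) fun j _ hj ↦ by simp [hj]]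
    simp [Int.natAbs_sign, hi]
  · obtain rfl | hj := eq_or_ne j i
    · rcases lt_trichotomy (v j) 0 with h | h | h <;> simp [h, Int.sign_eq_neg_one_of_neg,
        Int.sign_eq_one_of_pos] <;> omega
    · simp [hj]
  · rcases hi.lt_or_gt with h | h <;> simp [h, Int.sign_eq_neg_one_of_neg,
      Int.sign_eq_one_of_pos] <;> omega

theorem IsCovered.neg (h : IsCovered L r v) : IsCovered L r (-v) := by
  obtain ⟨w, hw, hle⟩ := h
  exact ⟨-w, neg_mem hw, by rwa [← neg_sub', l1Norm_neg]⟩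

theorem IsCovered.comp_perm {σ : Equiv.Perm ι} (hσ : ∀ w ∈ L, w ∘ σ ∈ L) (h : IsCovered L r v) :
    IsCovered L r (v ∘ σ) := by
  obtain ⟨w, hw, hle⟩ := h
  exact ⟨w ∘ σ, hσ w hw, (l1Norm_comp_perm (v - w) σ).trans_le hle⟩

theorem IsCovered.add_right (h : IsCovered L r v) (hw : w ∈ L) : IsCovered L r (v + w) := by
  obtain ⟨u, hu, hle⟩ := h
  exact ⟨u + w, add_mem hu hw, by rwa [add_sub_add_right_eq_sub]⟩

theorem isCovered_of_forall_l1Norm_eq (h : ∀ v, l1Norm v = r + 1 → IsCovered L r v)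
    (v : ι → ℤ) : IsCovered L r v := by
  have covered_of_le (v : ι → ℤ) (hv : l1Norm v ≤ r + 1) : IsCovered L r v := by
    obtain hlt | heq := hv.lt_or_eq
    · exact ⟨0, zero_mem L, by rw [sub_zero]; omega⟩
    · exact h v heq
  induction hN : l1Norm v using Nat.strong_induction_on generalizing v with
  | _ N ih =>
    obtain rfl | hv := eq_or_ne v 0
    · exact covered_of_le 0 (by simp [l1Norm])
    obtain ⟨u, hu, hlt⟩ := exists_unit_l1Norm_sub_lt hv
    obtain ⟨w, hw, hle⟩ := ih _ (hN ▸ hlt) (v - u) rfl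
    have hcov : IsCovered L r (v - u - w + u) :=
      covered_of_le _ ((l1Norm_add_le _ _).trans (by omega))
    convert hcov.add_right hw using 1
    abel

theorem exists_l1Norm_le_of_isCovered {M : Type*} [AddCommGroup M] {φ : (ι → ℤ) →ₗ[ℤ] M}
    (hL : L ≤ LinearMap.ker φ) (hcov : IsCovered L r v) : ∃ c, l1Norm c ≤ r ∧ φ c = φ v := by
  obtain ⟨w, hw, hle⟩ := hcov
  exact ⟨v - w, hle, by rw [map_sub, LinearMap.mem_ker.mp (hL hw), sub_zero]⟩

end Covering

section RelationLattice

/-- The lattice of relations between the four generators of the circulant graph with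
`k = 2m + 1`, given by a basis. Its index in `ℤ⁴` is the order `n` of the graph. -/
def relationLattice (m : ℤ) : Submodule ℤ (Fin 4 → ℤ) :=
  .span ℤ {![2 * m + 2, 0, 1, -1], ![0, 2 * m + 2, 1, -1], ![1, 1, 1, 2 * m + 1],
    ![m + 1, m + 1, -m, -m - 1]}

variable (m : ℤ)

/- A relation is named by the signs of its coordinates (`p`, `n`, or `z` for zero), or `axisᵢ` if
it is concentrated in the `i`-th coordinate. In `isCovered_pppp` etc., the signs name an orthant. -/

theorem axis₁_mem : ![2 * m + 2, 0, 1, -1] ∈ relationLattice m :=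
  Submodule.subset_span (by simp)

theorem axis₂_mem : ![0, 2 * m + 2, 1, -1] ∈ relationLattice m :=
  Submodule.subset_span (by simp)

theorem axis₄_mem : ![1, 1, 1, 2 * m + 1] ∈ relationLattice m :=
  Submodule.subset_span (by simp)

theorem ppnn_mem : ![m + 1, m + 1, -m, -m - 1] ∈ relationLattice m :=
  Submodule.subset_span (by simp)

theorem zzpp_mem : ![0, 0, 2 * m + 2, 2 * m] ∈ relationLattice m := by
  convert sub_mem (add_mem (axis₁_mem m) (axis₂_mem m)) (add_mem (ppnn_mem m) (ppnn_mem m)) using 1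
  ext i; fin_cases i <;> dsimp <;> ring

theorem axis₃_mem : ![-1, -1, 2 * m + 1, -1] ∈ relationLattice m := by
  convert sub_mem (zzpp_mem m) (axis₄_mem m) using 1
  ext i; fin_cases i <;> dsimp <;> ring

theorem pppp_mem : ![m + 1, m + 1, m + 2, m - 1] ∈ relationLattice m := by
  convert add_mem (ppnn_mem m) (zzpp_mem m) using 1
  ext i; fin_cases i <;> dsimp <;> ring

theorem pppn_mem : ![m, m, m + 1, -m - 2] ∈ relationLattice m := by
  convert add_mem (ppnn_mem m) (axis₃_mem m) using 1
  ext i; fin_cases i <;> dsimp <;> ring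

theorem ppnp_mem : ![m + 2, m + 2, 1 - m, m] ∈ relationLattice m := by
  convert add_mem (ppnn_mem m) (axis₄_mem m) using 1
  ext i; fin_cases i <;> dsimp <;> ring

theorem pnpp_mem : ![m + 1, -m - 1, m + 1, m] ∈ relationLattice m := by
  convert sub_mem (axis₁_mem m) (ppnn_mem m) using 1
  ext i; fin_cases i <;> dsimp <;> ring

theorem pnnn_mem : ![m + 1, -m - 1, -m - 1, -m] ∈ relationLattice m := by
  convert sub_mem (ppnn_mem m) (axis₂_mem m) using 1
  ext i; fin_cases i <;> dsimp <;> ring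

theorem pnpn_mem : ![m, -m - 2, m, -m - 1] ∈ relationLattice m := by
  convert sub_mem (pnpp_mem m) (axis₄_mem m) using 1
  ext i; fin_cases i <;> dsimp <;> ring

theorem pnnp_mem : ![m + 2, -m, -m, m + 1] ∈ relationLattice m := by
  convert add_mem (pnnn_mem m) (axis₄_mem m) using 1
  ext i; fin_cases i <;> dsimp <;> ring

variable {m}

theorem vec_comp_swap (a b c d : ℤ) : ![a, b, c, d] ∘ Equiv.swap 0 1 = ![b, a, c, d] := by
  ext i; fin_cases i <;> rfl

theorem comp_swap_mem_relationLattice {w : Fin 4 → ℤ} (hw : w ∈ relationLattice m) :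
    w ∘ Equiv.swap 0 1 ∈ relationLattice m := by
  induction hw using Submodule.span_induction with
  | mem w hw =>
    rcases hw with rfl | rfl | rfl | rfl <;> rw [vec_comp_swap]
    exacts [axis₂_mem m, axis₁_mem m, axis₄_mem m, ppnn_mem m]
  | zero => exact zero_mem _
  | add v w _ _ hv hw => exact add_mem hv hw
  | smul t w _ hw => exact Submodule.smul_mem _ t hw

end RelationLattice


section ShortVectors

variable {m : ℕ} {a b c d p q r s : ℤ}

theorem l1Norm_vec (a b c d : ℤ) :
    l1Norm ![a, b, c, d] = a.natAbs + b.natAbs + c.natAbs + d.natAbs := by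
  simp [l1Norm, Fin.sum_univ_four]

theorem isCovered_of_sub {L : Submodule ℤ (Fin 4 → ℤ)} {R : ℕ} (hw : ![p, q, r, s] ∈ L)
    (hle : (a - p).natAbs + (b - q).natAbs + (c - r).natAbs + (d - s).natAbs ≤ R) :
    IsCovered L R ![a, b, c, d] :=
  ⟨_, hw, by simpa [l1Norm, Fin.sum_univ_four] using hle⟩

theorem isCovered_of_add {L : Submodule ℤ (Fin 4 → ℤ)} {R : ℕ} (hw : ![p, q, r, s] ∈ L)
    (hle : (a + p).natAbs + (b + q).natAbs + (c + r).natAbs + (d + s).natAbs ≤ R) :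
    IsCovered L R ![a, b, c, d] :=
  ⟨_, neg_mem hw, by simpa [l1Norm, Fin.sum_univ_four] using hle⟩

theorem isCovered_axis₄ (hm : 1 ≤ m) :
    IsCovered (relationLattice m) (2 * m + 1) ![0, 0, 0, 2 * m + 2] := by
  obtain rfl | hm := hm.eq_or_lt
  · -- Here `(0, 0, 0, 4)` is not brought closer by any of the relations above.
    exact ⟨_, sub_mem (add_mem (axis₄_mem 1) (axis₄_mem 1)) (pppp_mem 1), by decide⟩
  · exact isCovered_of_sub (axis₄_mem m) (by omega)

theorem isCovered_of_long_coord (hm : 1 ≤ m)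
    (hs : a.natAbs + b.natAbs + c.natAbs + d.natAbs = 2 * m + 2)
    (h : m + 3 ≤ a.natAbs ∨ m + 3 ≤ b.natAbs ∨ m + 3 ≤ c.natAbs ∨ m + 3 ≤ d.natAbs) :
    IsCovered (relationLattice m) (2 * m + 1) ![a, b, c, d] := by
  rcases h with ha | hb | hc | hd
  · rcases le_total 0 a with hsign | hsign
    · exact isCovered_of_sub (axis₁_mem m) (by omega)
    · exact isCovered_of_add (axis₁_mem m) (by omega)
  · rcases le_total 0 b with hsign | hsign
    · exact isCovered_of_sub (axis₂_mem m) (by omega)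
    · exact isCovered_of_add (axis₂_mem m) (by omega)
  · obtain hlt | heq : c.natAbs < 2 * m + 2 ∨ c.natAbs = 2 * m + 2 := by omega
    · rcases le_total 0 c with hsign | hsign
      · exact isCovered_of_sub (axis₃_mem m) (by omega)
      · exact isCovered_of_add (axis₃_mem m) (by omega)
    · rcases le_total 0 c with hsign | hsign
      · exact isCovered_of_sub (zzpp_mem m) (by omega)
      · exact isCovered_of_add (zzpp_mem m) (by omega)
  · obtain hlt | heq : d.natAbs < 2 * m + 2 ∨ d.natAbs = 2 * m + 2 := by omega
    · rcases le_total 0 d with hsign | hsign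
      · exact isCovered_of_sub (axis₄_mem m) (by omega)
      · exact isCovered_of_add (axis₄_mem m) (by omega)
    · obtain ⟨rfl, rfl, rfl⟩ : a = 0 ∧ b = 0 ∧ c = 0 := by omega
      rcases Int.natAbs_eq d with hsign | hsign
      · rw [hsign, heq]
        exact_mod_cast isCovered_axis₄ hm
      · rw [hsign, heq]
        simpa using (isCovered_axis₄ hm).neg

theorem isCovered_pppp (hm : 1 ≤ m) (hb₀ : 0 ≤ b) (hc₀ : 0 ≤ c) (hd₀ : 0 ≤ d) (ha : a ≤ m + 2)
    (hc : c ≤ m + 2) (hd : d ≤ m + 2) (hab : b ≤ a) (hs : a + b + c + d = 2 * m + 2) :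
    IsCovered (relationLattice m) (2 * m + 1) ![a, b, c, d] := by
  obtain h | h | h : (a ≤ m + 1 ∧ d ≤ m - 1) ∨ a = m + 2 ∨ (a ≤ m + 1 ∧ m ≤ d) := by omega
  · exact isCovered_of_sub (pppp_mem m) (by omega)
  · obtain h | h : 1 ≤ c ∨ c = 0 := by omega
    · exact isCovered_of_sub (axis₁_mem m) (by omega)
    · exact isCovered_of_sub (ppnp_mem m) (by omega)
  · obtain h | h | h | h | h :
        m + 3 ≤ d + min a 1 + min b 1 + min c 1 ∨
        (c = 0 ∧ d = m) ∨
        (b = 0 ∧ c = 0 ∧ d = m + 1) ∨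
        (1 ≤ a ∧ b = 0 ∧ 1 ≤ c ∧ d = m) ∨
        (a = 0 ∧ b = 0 ∧ d ≤ m + 1) := by omega
    · exact isCovered_of_sub (axis₄_mem m) (by omega)
    · exact isCovered_of_sub (ppnp_mem m) (by omega)
    · exact isCovered_of_sub (pnnp_mem m) (by omega)
    · exact isCovered_of_sub (pnpp_mem m) (by omega)
    · exact isCovered_of_sub (zzpp_mem m) (by omega)

theorem isCovered_pppn (hm : 1 ≤ m) (hb₀ : 0 ≤ b) (hc₀ : 0 ≤ c) (hd₀ : 0 ≤ d) (hc : c ≤ m + 2)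
    (hd : d ≤ m + 2) (hab : b ≤ a) (hs : a + b + c + d = 2 * m + 2) :
    IsCovered (relationLattice m) (2 * m + 1) ![a, b, c, -d] := by
  obtain h | h | h : (a ≤ m ∧ c ≤ m + 1) ∨ c = m + 2 ∨ m + 1 ≤ a := by omega
  · exact isCovered_of_sub (pppn_mem m) (by omega)
  · obtain h | h : 1 ≤ d ∨ d = 0 := by omega
    · exact isCovered_of_sub (axis₃_mem m) (by omega)
    · exact isCovered_of_sub (pppp_mem m) (by omega)
  · obtain h | h | h | h :
        m + 3 ≤ a + min c 1 + min d 1 ∨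
        (a = m + 2 ∧ c = 0 ∧ d = 0) ∨
        (a = m + 1 ∧ c = 0) ∨
        (a = m + 1 ∧ d = 0) := by omega
    · exact isCovered_of_sub (axis₁_mem m) (by omega)
    · exact isCovered_of_sub (ppnp_mem m) (by omega)
    · exact isCovered_of_sub (ppnn_mem m) (by omega)
    · exact isCovered_of_sub (pppp_mem m) (by omega)

theorem isCovered_nnpp (hm : 1 ≤ m) (ha₀ : 0 ≤ a) (hc₀ : 0 ≤ c) (hd₀ : 0 ≤ d) (hb : b ≤ m + 2)
    (hc : c ≤ m + 2) (hd : d ≤ m + 2) (hab : a ≤ b) (hs : a + b + c + d = 2 * m + 2) :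
    IsCovered (relationLattice m) (2 * m + 1) ![-a, -b, c, d] := by
  obtain h | h | h | h :
      (b ≤ m + 1 ∧ c ≤ m ∧ d ≤ m + 1) ∨ b = m + 2 ∨ m + 1 ≤ c ∨ d = m + 2 := by omega
  · exact isCovered_of_add (ppnn_mem m) (by omega)
  · obtain h | h | h : 1 ≤ d ∨ (c ≤ m - 1 ∧ d = 0) ∨ (c = m ∧ d = 0) := by omega
    · exact isCovered_of_add (axis₂_mem m) (by omega)
    · exact isCovered_of_add (ppnp_mem m) (by omega)
    · exact isCovered_of_sub (pnpn_mem m) (by omega)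
  · obtain h | h | h :
        m + 3 ≤ c + min a 1 + min b 1 ∨ (a = 0 ∧ 1 ≤ b ∧ c = m + 1) ∨ (a = 0 ∧ b = 0) := by omega
    · exact isCovered_of_sub (axis₃_mem m) (by omega)
    · exact isCovered_of_sub (pnpp_mem m) (by omega)
    · exact isCovered_of_sub (zzpp_mem m) (by omega)
  · obtain h | h : 1 ≤ c ∨ c = 0 := by omega
    · exact isCovered_of_sub (axis₄_mem m) (by omega)
    · exact isCovered_of_add (pppn_mem m) (by omega)

theorem isCovered_nnpn (hm : 1 ≤ m) (ha₀ : 0 ≤ a) (hc₀ : 0 ≤ c) (hd₀ : 0 ≤ d) (hb : b ≤ m + 2)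
    (hc : c ≤ m + 2) (hd : d ≤ m + 2) (hab : a ≤ b) (hs : a + b + c + d = 2 * m + 2) :
    IsCovered (relationLattice m) (2 * m + 1) ![-a, -b, c, -d] := by
  obtain h | h | h : (c ≤ m - 1 ∧ d ≤ m) ∨ (m ≤ c ∧ d ≤ m) ∨ m + 1 ≤ d := by omega
  · exact isCovered_of_add (ppnp_mem m) (by omega)
  · obtain h | h | h | h :
        m + 3 ≤ c + min a 1 + min b 1 + min d 1 ∨
        (a = 0 ∧ c = m) ∨
        (a = 0 ∧ c = m + 1 ∧ d = 0) ∨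
        (1 ≤ a ∧ c = m ∧ d = 0) := by omega
    · exact isCovered_of_sub (axis₃_mem m) (by omega)
    · exact isCovered_of_sub (pnpn_mem m) (by omega)
    · exact isCovered_of_sub (pnpp_mem m) (by omega)
    · exact isCovered_of_add (ppnn_mem m) (by omega)
  · obtain h | h | h :
        m + 3 ≤ d + min a 1 + min b 1 ∨ (a = 0 ∧ 1 ≤ b ∧ d = m + 1) ∨ (a = 0 ∧ b = 0) := by omega
    · exact isCovered_of_add (axis₄_mem m) (by omega)
    · exact isCovered_of_sub (pnpn_mem m) (by omega)
    · exact isCovered_of_sub (pppn_mem m) (by omega)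

theorem isCovered_pnpp (hm : 1 ≤ m) (ha₀ : 0 ≤ a) (hb₀ : 0 ≤ b) (hc₀ : 0 ≤ c) (hd₀ : 0 ≤ d)
    (ha : a ≤ m + 2) (hb : b ≤ m + 2) (hc : c ≤ m + 2) (hd : d ≤ m + 2)
    (hs : a + b + c + d = 2 * m + 2) :
    IsCovered (relationLattice m) (2 * m + 1) ![a, -b, c, d] := by
  obtain h | h | h | h | h :
      (a ≤ m + 1 ∧ b ≤ m + 1 ∧ c ≤ m + 1 ∧ d ≤ m) ∨
      a = m + 2 ∨
      b = m + 2 ∨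
      c = m + 2 ∨
      (a ≤ m + 1 ∧ b ≤ m + 1 ∧ c ≤ m + 1 ∧ m + 1 ≤ d) := by omega
  · exact isCovered_of_sub (pnpp_mem m) (by omega)
  · obtain h | h : 1 ≤ c ∨ c = 0 := by omega
    · exact isCovered_of_sub (axis₁_mem m) (by omega)
    · exact isCovered_of_sub (pnnp_mem m) (by omega)
  · obtain h | h : 1 ≤ d ∨ d = 0 := by omega
    · exact isCovered_of_add (axis₂_mem m) (by omega)
    · exact isCovered_of_sub (pnpn_mem m) (by omega)
  · obtain h | h | h : 1 ≤ b ∨ (b = 0 ∧ d ≤ m - 1) ∨ (b = 0 ∧ d = m) := by omega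
    · exact isCovered_of_sub (axis₃_mem m) (by omega)
    · exact isCovered_of_sub (pppp_mem m) (by omega)
    · exact isCovered_of_sub (zzpp_mem m) (by omega)
  · obtain h | h | h | h | h :
        m + 3 ≤ d + min a 1 + min c 1 ∨
        (a = 0 ∧ c = 0 ∧ d = m + 2) ∨
        (b ≤ m ∧ c = 0 ∧ d = m + 1) ∨
        (a = 0 ∧ c ≤ m ∧ d = m + 1) ∨
        (a = 0 ∧ c = m + 1) := by omega
    · exact isCovered_of_sub (axis₄_mem m) (by omega)
    · exact isCovered_of_add (pppn_mem m) (by omega)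
    · exact isCovered_of_sub (pnnp_mem m) (by omega)
    · exact isCovered_of_add (ppnn_mem m) (by omega)
    · exact isCovered_of_sub (zzpp_mem m) (by omega)

theorem isCovered_pnpn (hm : 1 ≤ m) (ha₀ : 0 ≤ a) (hb₀ : 0 ≤ b) (hc₀ : 0 ≤ c) (hd₀ : 0 ≤ d)
    (hb : b ≤ m + 2) (hc : c ≤ m + 2) (hd : d ≤ m + 2) (hs : a + b + c + d = 2 * m + 2) :
    IsCovered (relationLattice m) (2 * m + 1) ![a, -b, c, -d] := by
  obtain h | h | h | h :
      (a ≤ m ∧ c ≤ m ∧ d ≤ m + 1) ∨ m + 1 ≤ a ∨ (a ≤ m ∧ m + 1 ≤ c) ∨ d = m + 2 := by omega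
  · exact isCovered_of_sub (pnpn_mem m) (by omega)
  · obtain h | h | h | h | h :
        m + 3 ≤ a + min c 1 + min d 1 ∨
        (a = m + 2 ∧ c = 0 ∧ d = 0) ∨
        (a = m + 1 ∧ c = 0 ∧ d ≤ m) ∨
        (a = m + 1 ∧ c = 0 ∧ d = m + 1) ∨
        (a = m + 1 ∧ d = 0) := by omega
    · exact isCovered_of_sub (axis₁_mem m) (by omega)
    · exact isCovered_of_sub (pnnp_mem m) (by omega)
    · exact isCovered_of_sub (pnnn_mem m) (by omega)
    · exact isCovered_of_sub (ppnn_mem m) (by omega)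
    · exact isCovered_of_sub (pnpp_mem m) (by omega)
  · obtain h | h | h | h :
        m + 3 ≤ c + min b 1 + min d 1 ∨
        (b = 0 ∧ c = m + 2 ∧ d = 0) ∨
        (b = 0 ∧ c = m + 1) ∨
        (c = m + 1 ∧ d = 0) := by omega
    · exact isCovered_of_sub (axis₃_mem m) (by omega)
    · exact isCovered_of_sub (pppp_mem m) (by omega)
    · exact isCovered_of_sub (pppn_mem m) (by omega)
    · exact isCovered_of_sub (pnpp_mem m) (by omega)
  · obtain h | h : 1 ≤ b ∨ b = 0 := by omega
    · exact isCovered_of_add (axis₄_mem m) (by omega)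
    · exact isCovered_of_sub (pppn_mem m) (by omega)

end ShortVectors

section Circulant

variable {m : ℕ}

theorem isCovered_of_l1Norm_eq (hm : 1 ≤ m) (v : Fin 4 → ℤ) (hv : l1Norm v = 2 * m + 1 + 1) :
    IsCovered (relationLattice m) (2 * m + 1) v := by
  obtain ⟨a, b, c, d, rfl⟩ : ∃ a b c d, v = ![a, b, c, d] :=
    ⟨v 0, v 1, v 2, v 3, by ext i; fin_cases i <;> rfl⟩
  rw [l1Norm_vec] at hv
  by_cases hlong : m + 3 ≤ a.natAbs ∨ m + 3 ≤ b.natAbs ∨ m + 3 ≤ c.natAbs ∨ m + 3 ≤ d.natAbs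
  · exact isCovered_of_long_coord hm hv hlong
  wlog hc : 0 ≤ c generalizing a b c d
  · simpa using (this (-a) (-b) (-c) (-d) (by omega) (by omega) (by omega)).neg
  wlog hab : b ≤ a generalizing a b
  · simpa [vec_comp_swap] using (this b a (by omega) (by omega) (by omega)).comp_perm
      (σ := Equiv.swap 0 1) fun _ ↦ comp_swap_mem_relationLattice
  obtain ⟨ha, hb⟩ | ⟨ha, hb⟩ | ⟨ha, hb⟩ : (0 ≤ a ∧ 0 ≤ b) ∨ (0 ≤ a ∧ b ≤ 0) ∨ (a ≤ 0 ∧ b ≤ 0) := by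
    omega
  all_goals rcases le_total 0 d with hd | hd
  · apply isCovered_pppp hm <;> omega
  · rw [← neg_neg d]
    apply isCovered_pppn hm <;> omega
  · rw [← neg_neg b]
    apply isCovered_pnpp hm <;> omega
  · rw [← neg_neg b, ← neg_neg d]
    apply isCovered_pnpn hm <;> omega
  · rw [← neg_neg a, ← neg_neg b]
    apply isCovered_nnpp hm <;> omega
  · rw [← neg_neg a, ← neg_neg b, ← neg_neg d]
    apply isCovered_nnpn hm <;> omega

theorem isCovered_relationLattice (hm : 1 ≤ m) (v : Fin 4 → ℤ) :
    IsCovered (relationLattice m) (2 * m + 1) v :=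
  isCovered_of_forall_l1Norm_eq (isCovered_of_l1Norm_eq hm) v

/-- The order `n` of the circulant graph with `k = 2m + 1`, without the division. -/
def circulantOrder (m : ℕ) : ℕ := 8 * m ^ 4 + 24 * m ^ 3 + 36 * m ^ 2 + 28 * m + 8

/-- The generators `g₁, g₂, g₃, g₄` for `k = 2m + 1`, as integers and without the divisions. -/
def circulantGenerator (m : ℤ) : Fin 4 → ℤ :=
  ![1, 4 * m ^ 3 + 8 * m ^ 2 + 10 * m + 5, 4 * m ^ 4 + 8 * m ^ 3 + 8 * m ^ 2 - 4,
    4 * m ^ 4 + 8 * m ^ 3 + 8 * m ^ 2 + 2 * m - 2]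

theorem order_eq (m : ℕ) :
    ((2 * m + 1) ^ 4 + 2 * (2 * m + 1) ^ 3 + 6 * (2 * m + 1) ^ 2 + 6 * (2 * m + 1) + 1) / 2 =
      circulantOrder m :=
  Nat.div_eq_of_eq_mul_right (by norm_num) (by rw [circulantOrder]; ring)

theorem generator₂_eq (m : ℤ) :
    ((2 * m + 1) ^ 3 + (2 * m + 1) ^ 2 + 5 * (2 * m + 1) + 3) / 2 = circulantGenerator m 1 :=
  Int.ediv_eq_of_eq_mul_right (by norm_num) (by dsimp [circulantGenerator]; ring)

theorem generator₃_eq (m : ℤ) :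
    ((2 * m + 1) ^ 4 + 2 * (2 * m + 1) ^ 2 - 8 * (2 * m + 1) - 11) / 4 =
      circulantGenerator m 2 :=
  Int.ediv_eq_of_eq_mul_right (by norm_num) (by dsimp [circulantGenerator]; ring)

theorem generator₄_eq (m : ℤ) :
    ((2 * m + 1) ^ 4 + 2 * (2 * m + 1) ^ 2 - 4 * (2 * m + 1) - 7) / 4 =
      circulantGenerator m 3 :=
  Int.ediv_eq_of_eq_mul_right (by norm_num) (by dsimp [circulantGenerator]; ring)

/-- The homomorphism `ℤ⁴ → ℤ/nℤ` sending `c` to `∑ cᵢ gᵢ`. -/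
def generatorCombination (m : ℕ) : (Fin 4 → ℤ) →ₗ[ℤ] ZMod (circulantOrder m) :=
  Fintype.linearCombination ℤ fun i ↦ (circulantGenerator m i : ZMod (circulantOrder m))

theorem generatorCombination_apply (m : ℕ) (c : Fin 4 → ℤ) :
    generatorCombination m c = ((∑ i, c i * circulantGenerator m i : ℤ) : ZMod _) := by
  simp [generatorCombination, Fintype.linearCombination_apply]

theorem relationLattice_le_ker (m : ℕ) :
    relationLattice m ≤ LinearMap.ker (generatorCombination m) := by
  have mem_ker_of_eq_mul {c : Fin 4 → ℤ} (t : ℤ)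
      (h : ∑ i, c i * circulantGenerator m i = circulantOrder m * t) :
      c ∈ LinearMap.ker (generatorCombination m) := by
    rw [LinearMap.mem_ker, generatorCombination_apply, h, Int.cast_mul, Int.cast_natCast,
      ZMod.natCast_self, zero_mul]
  refine Submodule.span_le.mpr ?_
  rintro _ (rfl | rfl | rfl | rfl)
  on_goal 1 => apply mem_ker_of_eq_mul 0
  on_goal 2 => apply mem_ker_of_eq_mul 1
  on_goal 3 => apply mem_ker_of_eq_mul m
  on_goal 4 => apply mem_ker_of_eq_mul (1 - m)
  all_goals
    rw [Fin.sum_univ_four]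
    dsimp [circulantGenerator, circulantOrder]
    ring

theorem exists_l1Norm_le_generatorCombination_eq (hm : 1 ≤ m) (x : ZMod (circulantOrder m)) :
    ∃ c, l1Norm c ≤ 2 * m + 1 ∧ generatorCombination m c = x := by
  obtain ⟨y, rfl⟩ := ZMod.intCast_surjective x
  have hy : generatorCombination m ![y, 0, 0, 0] = y := by
    simp [generatorCombination_apply, Fin.sum_univ_four, circulantGenerator]
  rw [← hy]
  exact exists_l1Norm_le_of_isCovered (relationLattice_le_ker m) (isCovered_relationLattice hm _)

end Circulant

/-- The circulant graph on `ℤ/nℤ`, `n = (k⁴ + 2k³ + 6k² + 6k + 1)/2` for odd `k ≥ 3`,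
with connection set `{±1, ±(k³+k²+5k+3)/2, ±(k⁴+2k²-8k-11)/4, ±(k⁴+2k²-4k-7)/4}`,
has diameter at most `k`. -/
theorem circulant_deg8_diameter_odd (k : ℕ) (hk : 3 ≤ k) (hko : Odd k)
    (n : ℕ) (hn : n = (k ^ 4 + 2 * k ^ 3 + 6 * k ^ 2 + 6 * k + 1) / 2)
    (g₁ g₂ g₃ g₄ : ZMod n)
    (hg₁ : g₁ = 1)
    (hg₂ : g₂ = ((((k : ℤ) ^ 3 + k ^ 2 + 5 * k + 3) / 2 : ℤ) : ZMod n))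
    (hg₃ : g₃ = ((((k : ℤ) ^ 4 + 2 * k ^ 2 - 8 * k - 11) / 4 : ℤ) : ZMod n))
    (hg₄ : g₄ = ((((k : ℤ) ^ 4 + 2 * k ^ 2 - 4 * k - 7) / 4 : ℤ) : ZMod n)) :
    ∀ x : ZMod n, ∃ c₁ c₂ c₃ c₄ : ℤ,
      |c₁| + |c₂| + |c₃| + |c₄| ≤ (k : ℤ) ∧
      x = c₁ • g₁ + c₂ • g₂ + c₃ • g₃ + c₄ • g₄ := by
  obtain ⟨m, rfl⟩ := hko
  rw [order_eq] at hn
  subst hn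
  push_cast at hg₂ hg₃ hg₄
  rw [generator₂_eq] at hg₂
  rw [generator₃_eq] at hg₃
  rw [generator₄_eq] at hg₄
  intro x
  obtain ⟨c, hc, rfl⟩ := exists_l1Norm_le_generatorCombination_eq (by omega : 1 ≤ m) x
  refine ⟨c 0, c 1, c 2, c 3, ?_, ?_⟩
  · rw [l1Norm, Fin.sum_univ_four] at hc
    simp only [Int.abs_eq_natAbs]
    omega
  · have generator₁_eq : circulantGenerator m 0 = 1 := rfl
    simp [generatorCombination_apply, Fin.sum_univ_four, generator₁_eq, hg₁, hg₂, hg₃, hg₄]
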